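/- arXiv:1710.07132 — 6 statements merged into one kernel-verified Lean document; each statement's English description precedes it below -/
import Mathlib

section
/- For every integer k ≥ 1 there exists a finite simple graph G with χ₃(G) = 1 and χ(G) = k; equivalently, there exists a triangle-free finite simple graph whose chromatic number equals k. -/
/-- A triangle-free coloring of `G` with `k` colors: no three mutually adjacent
vertices receive the same color. -/
def IsTriangleFreeColoring {V : Type*} (G : SimpleGraph V) {k : ℕ} (c : V → Fin k) : Prop :=
  ∀ u v w : V, G.Adj u v → G.Adj v w → G.Adj u w → ¬(c u = c v ∧ c v = c w)

/-- The triangle-free chromatic number: the least `k` admitting a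
triangle-free `k`-coloring. -/
noncomputable def triChromNum {V : Type*} (G : SimpleGraph V) : ℕ :=
  sInf {k : ℕ | ∃ c : V → Fin k, IsTriangleFreeColoring G c}

/-- The chromatic number: the least number of colors in a proper coloring. -/
noncomputable def chromNum {V : Type*} (G : SimpleGraph V) : ℕ :=
  sInf {n : ℕ | G.Colorable n}

/-!
Starting from the empty graph, we iterate Mycielski's construction, which raises the chromatic
number by exactly one. It creates no new clique on three or more vertices: the neighbours of the
apex are pairwise non-adjacent, so such a clique avoids the apex, and away from the apex the
Mycielskian maps homomorphically onto the original graph.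
-/

section ChromaticNumbers

open SimpleGraph

variable {V : Type*} {G : SimpleGraph V}

theorem IsTriangleFreeColoring.castLE {k l : ℕ} {c : V → Fin k}
    (hc : IsTriangleFreeColoring G c) (hkl : k ≤ l) :
    IsTriangleFreeColoring G (Fin.castLE hkl ∘ c) := by
  simpa only [IsTriangleFreeColoring, Function.comp_apply, Fin.castLE_inj] using hc

theorem isTriangleFreeColoring_fin_one_iff {c : V → Fin 1} :
    IsTriangleFreeColoring G c ↔ G.CliqueFree 3 := by
  have no_triangle_iff : IsTriangleFreeColoring G c ↔
      ∀ u v w, G.Adj u v → G.Adj v w → G.Adj u w → False := by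
    simp only [IsTriangleFreeColoring, eq_iff_true_of_subsingleton, and_self, not_true_eq_false]
  classical
  rw [no_triangle_iff]
  refine ⟨fun h s hs ↦ ?_, fun h u v w huv hvw huw ↦
    h _ (is3Clique_triple_iff.2 ⟨huv, huw, hvw⟩)⟩
  obtain ⟨u, v, w, huv, huw, hvw, -⟩ := is3Clique_iff.1 hs
  exact h u v w huv hvw huw

theorem triChromNum_eq_one_iff : triChromNum G = 1 ↔ Nonempty V ∧ G.CliqueFree 3 := by
  have castLE_mem (k l : ℕ) (hkl : k ≤ l) (hk : ∃ c : V → Fin k, IsTriangleFreeColoring G c) :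
      ∃ c : V → Fin l, IsTriangleFreeColoring G c :=
    hk.imp' _ fun _ hc ↦ hc.castLE hkl
  have exists_zero_iff : (∃ c : V → Fin 0, IsTriangleFreeColoring G c) ↔ IsEmpty V :=
    ⟨fun ⟨c, _⟩ ↦ c.isEmpty, fun _ ↦ ⟨isEmptyElim, isEmptyElim⟩⟩
  calc triChromNum G = 1
    _ ↔ (∃ c : V → Fin 1, IsTriangleFreeColoring G c) ∧
          ¬ ∃ c : V → Fin 0, IsTriangleFreeColoring G c :=
        Nat.sInf_upward_closed_eq_succ_iff castLE_mem 0
    _ ↔ Nonempty V ∧ G.CliqueFree 3 := by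
        simp only [isTriangleFreeColoring_fin_one_iff, exists_zero_iff, exists_const,
          not_isEmpty_iff, and_comm]

theorem chromNum_eq_toNat_chromaticNumber (G : SimpleGraph V) :
    chromNum G = G.chromaticNumber.toNat := by
  by_cases hG : ∃ n, G.Colorable n
  · obtain ⟨n, hn⟩ := hG
    rw [hn.chromaticNumber_eq_sInf, ENat.toNat_natCast, chromNum]
  · have hempty : {n : ℕ | G.Colorable n} = ∅ := by
      simpa [Set.eq_empty_iff_forall_notMem] using hG
    have htop : G.chromaticNumber = ⊤ := by
      simpa using mt chromaticNumber_ne_top_iff_exists.1 hG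
    rw [chromNum, hempty, htop, Nat.sInf_empty, ENat.toNat_top]

end ChromaticNumbers

/-- The vertices of the Mycielskian of a graph on `V`: two copies of `V` and an extra vertex. -/
inductive MycielskiVertex (V : Type*)
  | original (v : V)
  | shadow (v : V)
  | apex

section Mycielskian

open SimpleGraph MycielskiVertex

instance MycielskiVertex.instFinite {V : Type*} [Finite V] : Finite (MycielskiVertex V) := by
  let toOption : MycielskiVertex V → Option (V ⊕ V)
    | original v => some (.inl v)
    | shadow v => some (.inr v)
    | apex => none
  exact .of_injective toOption <| by rintro (u | u | _) (v | v | _) h <;> simp_all [toOption]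

variable {V : Type*} {G : SimpleGraph V}

/-- The Mycielskian of `G`, which raises the chromatic number without creating larger cliques.
The shadow of `v` is joined to the original neighbours of `v` and to the apex. -/
def mycielskian (G : SimpleGraph V) : SimpleGraph (MycielskiVertex V) where
  Adj
    | original u, original v | original u, shadow v | shadow u, original v => G.Adj u v
    | shadow _, apex | apex, shadow _ => True
    | _, _ => False
  symm := ⟨by rintro (u | u | _) (v | v | _) <;> simp [G.adj_comm]⟩
  loopless := ⟨by rintro (_ | _ | _) <;> simp⟩

/-- Forgetting the difference between originals and shadows projects the Mycielskian without its
apex onto `G`. -/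
def mycielskianProj (G : SimpleGraph V) : (mycielskian G).induce {apex}ᶜ →g G where
  toFun
    | ⟨original v, _⟩ | ⟨shadow v, _⟩ => v
    | ⟨apex, h⟩ => (h rfl).elim
  map_rel' := by
    rintro ⟨u | u | _, hu⟩ ⟨v | v | _, hv⟩ h
    all_goals first | exact h | exact h.elim | exact (hu rfl).elim | exact (hv rfl).elim

theorem mycielskian_adj_apex_iff {x : MycielskiVertex V} :
    (mycielskian G).Adj apex x ↔ ∃ v, shadow v = x := by
  cases x <;> simp [mycielskian]

theorem not_mycielskian_adj_shadow_shadow {u v : V} :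
    ¬ (mycielskian G).Adj (shadow u) (shadow v) :=
  id

theorem apex_notMem_of_isNClique_mycielskian {n : ℕ} {s : Finset (MycielskiVertex V)} (hn : 3 ≤ n)
    (hs : (mycielskian G).IsNClique n s) : apex ∉ s := by
  classical
  intro hapex
  have hcard : 1 < (s.erase apex).card := by
    rw [Finset.card_erase_of_mem hapex, hs.card_eq]
    omega
  have shadow_of_mem {x} (hx : x ∈ s.erase apex) : ∃ v, shadow v = x :=
    mycielskian_adj_apex_iff.1 <|
      hs.isClique hapex (Finset.mem_of_mem_erase hx) (Finset.ne_of_mem_erase hx).symm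
  obtain ⟨x, hx, y, hy, hxy⟩ := Finset.one_lt_card.1 hcard
  obtain ⟨u, rfl⟩ := shadow_of_mem hx
  obtain ⟨v, rfl⟩ := shadow_of_mem hy
  exact not_mycielskian_adj_shadow_shadow <|
    hs.isClique (Finset.mem_of_mem_erase hx) (Finset.mem_of_mem_erase hy) hxy

theorem cliqueFree_mycielskian {n : ℕ} (hn : 3 ≤ n) (hG : G.CliqueFree n) :
    (mycielskian G).CliqueFree n := by
  have hinduce : ((mycielskian G).induce {apex}ᶜ).CliqueFree n := by
    rw [cliqueFree_iff] at hG ⊢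
    exact ⟨fun f ↦
      let g := (mycielskianProj G).comp f.toHom
      hG.false (g.toCopy g.injective_of_top_hom)⟩
  intro s hs
  exact (cliqueFree_induce_iff (mycielskian G) {apex}ᶜ n).1 hinduce
    (Set.subset_compl_singleton_iff.2 <| apex_notMem_of_isNClique_mycielskian hn hs) hs

theorem colorable_succ_mycielskian {n : ℕ} (hG : G.Colorable n) :
    (mycielskian G).Colorable (n + 1) := by
  obtain ⟨c⟩ := hG
  let extend : MycielskiVertex V → Option (Fin n)
    | original v | shadow v => some (c v)
    | apex => none
  have extend_valid {x y} (h : (mycielskian G).Adj x y) : extend x ≠ extend y := by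
    rcases x with u | u | _ <;> rcases y with v | v | _
    all_goals first
      | exact h.elim
      | exact (Option.some_injective _).ne (c.valid h)
      | exact Option.some_ne_none _
      | exact (Option.some_ne_none _).symm
  simpa using (Coloring.mk extend extend_valid).colorable

theorem colorable_of_colorable_succ_mycielskian {n : ℕ} (h : (mycielskian G).Colorable (n + 1)) :
    G.Colorable n := by
  obtain ⟨c⟩ := h
  -- The colour of the apex is freed by giving every original that uses it the colour of its shadow.
  let recolor (v : V) : Fin (n + 1) :=
    if c (original v) = c apex then c (shadow v) else c (original v)
  have recolor_ne_apex (v : V) : recolor v ≠ c apex := by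
    have shadow_ne : c (shadow v) ≠ c apex := c.valid trivial
    grind
  have recolor_valid {u v : V} (huv : G.Adj u v) : recolor u ≠ recolor v := by
    have original_original : c (original u) ≠ c (original v) := c.valid huv
    have original_shadow : c (original u) ≠ c (shadow v) := c.valid huv
    have shadow_original : c (shadow u) ≠ c (original v) := c.valid huv
    grind
  let d : G.Coloring {i : Fin (n + 1) // i ≠ c apex} :=
    .mk (fun v ↦ ⟨recolor v, recolor_ne_apex v⟩) fun huv ↦ by simpa using recolor_valid huv
  simpa using d.colorable

theorem colorable_succ_mycielskian_iff {n : ℕ} :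
    (mycielskian G).Colorable (n + 1) ↔ G.Colorable n :=
  ⟨colorable_of_colorable_succ_mycielskian, colorable_succ_mycielskian⟩

theorem chromaticNumber_mycielskian (G : SimpleGraph V) :
    (mycielskian G).chromaticNumber = G.chromaticNumber + 1 := by
  refine eq_of_forall_ge_iff fun m ↦ ?_
  cases m using ENat.recTopCoe with
  | top => simp only [le_top]
  | coe m =>
    cases m with
    | zero =>
      have : Nonempty (MycielskiVertex V) := ⟨apex⟩
      simp [chromaticNumber_eq_zero_iff]
    | succ n =>
      calc (mycielskian G).chromaticNumber ≤ (n + 1 : ℕ)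
        _ ↔ G.chromaticNumber ≤ n := by
            simp only [chromaticNumber_le_iff_colorable, colorable_succ_mycielskian_iff]
        _ ↔ G.chromaticNumber + 1 ≤ (n + 1 : ℕ) := by
            rw [Nat.cast_succ, ENat.add_le_add_iff_right ENat.one_ne_top]

end Mycielskian

theorem exists_cliqueFree_three_chromaticNumber_eq (k : ℕ) :
    ∃ (n : ℕ) (G : SimpleGraph (Fin n)), G.CliqueFree 3 ∧ G.chromaticNumber = k := by
  induction k with
  | zero =>
    exact ⟨0, ⊥, SimpleGraph.cliqueFree_bot (by simp),
      SimpleGraph.chromaticNumber_eq_zero_of_isEmpty⟩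
  | succ k ih =>
    obtain ⟨n, G, hfree, hchrom⟩ := ih
    have := Fintype.ofFinite (MycielskiVertex (Fin n))
    let e := (mycielskian G).overFinIso rfl
    refine ⟨_, (mycielskian G).overFin rfl, ?_, ?_⟩
    · exact (cliqueFree_mycielskian le_rfl hfree).comap e.symm.isContained
    · rw [← SimpleGraph.chromaticNumber_congr e, chromaticNumber_mycielskian, hchrom, Nat.cast_succ]

/-- For every `k ≥ 1` there is a finite simple graph with `χ₃(G) = 1` and `χ(G) = k`. -/
theorem exists_triangleFree_graph_with_chromNum (k : ℕ) (hk : 1 ≤ k) :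
    ∃ (n : ℕ) (G : SimpleGraph (Fin n)), triChromNum G = 1 ∧ chromNum G = k := by
  obtain ⟨n, G, hfree, hchrom⟩ := exists_cliqueFree_three_chromaticNumber_eq k
  have hnonempty : Nonempty (Fin n) := by
    rw [← not_isEmpty_iff, ← SimpleGraph.chromaticNumber_eq_zero_iff (G := G), hchrom]
    exact_mod_cast Nat.ne_of_gt hk
  refine ⟨n, G, triChromNum_eq_one_iff.2 ⟨hnonempty, hfree⟩, ?_⟩
  rw [chromNum_eq_toNat_chromaticNumber, hchrom, ENat.toNat_natCast]
end

section
/- Let k ≥ 1. In every triangle-free k-coloring of the k-cycle-clique, for every i ∈ {0,…,4} the k vertices of the joint J_i receive pairwise distinct colors. -/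
/-- The `k`-cycle-clique with `r` joints: vertices `v_{i,j}` for `i < r`, `j < k`;
two distinct vertices are adjacent iff their first coordinates are at cyclic
distance at most 1 modulo `r`. -/
def cycleClique (r k : ℕ) : SimpleGraph (Fin r × Fin k) :=
  SimpleGraph.fromRel (fun p q => (p.1.val + 1) % r = q.1.val ∨ p.1 = q.1)

/-!
A colour class meets the clique `J_i ∪ J_{i+1}` in at most two vertices, while these `2k` vertices
share only `k` colours, so every colour occurs there exactly twice. Hence the deviation from `1` of
the number of occurrences of a colour in `J_i` changes sign from each joint to the next. Going once
around a cycle of odd length forces it to be `0`.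
-/

open Finset

theorem IsTriangleFreeColoring.card_filter_le_two {V : Type*} {G : SimpleGraph V} {k : ℕ}
    {c : V → Fin k} (hc : IsTriangleFreeColoring G c) {s : Finset V} (hs : G.IsClique (s : Set V))
    (a : Fin k) : #{v ∈ s | c v = a} ≤ 2 := by
  by_contra! hcard
  obtain ⟨u, hu, v, hv, w, hw, huv, huw, hvw⟩ := two_lt_card.1 hcard
  rw [mem_filter] at hu hv hw
  exact hc u v w (hs hu.1 hv.1 huv) (hs hv.1 hw.1 hvw) (hs hu.1 hw.1 huw)
    ⟨hu.2.trans hv.2.symm, hv.2.trans hw.2.symm⟩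

namespace cycleClique

variable {r k m : ℕ}

/-- The joint `J_i` of the `m`-cycle-clique with `r` joints, as a set of vertices. -/
def joint (m : ℕ) (i : Fin r) : Finset (Fin r × Fin m) := {i} ×ˢ univ

@[simp]
theorem mem_joint {i : Fin r} {p : Fin r × Fin m} : p ∈ joint m i ↔ p.1 = i := by
  simp only [joint, mem_product, mem_singleton, mem_univ, and_true]

theorem card_joint (i : Fin r) : #(joint m i) = m := by
  simp [joint]

theorem disjoint_joint {i i' : Fin r} (h : i ≠ i') : Disjoint (joint m i) (joint m i') :=
  disjoint_left.2 fun _ hp hp' => h ((mem_joint.1 hp).symm.trans (mem_joint.1 hp'))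

theorem adj_iff [NeZero r] {p q : Fin r × Fin m} :
    (cycleClique r m).Adj p q ↔ p ≠ q ∧ (p.1 = q.1 ∨ p.1 + 1 = q.1 ∨ q.1 + 1 = p.1) := by
  have val_succ (x : Fin r) : (x.val + 1) % r = (x + 1).val := by
    simp [Fin.val_add]
  simp only [cycleClique, SimpleGraph.fromRel_adj, val_succ, Fin.val_inj]
  grind

theorem isClique_joint_union_joint_succ [NeZero r] (i : Fin r) :
    (cycleClique r m).IsClique (joint m i ∪ joint m (i + 1) : Finset (Fin r × Fin m)) := by
  intro p hp q hq hpq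
  simp only [coe_union, Set.mem_union, mem_coe, mem_joint] at hp hq
  rw [adj_iff]
  grind

/-- The number of vertices of color `a` in the joint `J_i`. -/
def colorCount (c : Fin r × Fin m → Fin k) (i : Fin r) (a : Fin k) : ℕ :=
  #{p ∈ joint m i | c p = a}

theorem sum_colorCount (c : Fin r × Fin m → Fin k) (i : Fin r) : ∑ a, colorCount c i a = m := by
  simpa only [colorCount, card_joint] using
    (card_eq_sum_card_fiberwise (f := c) (s := joint m i) (t := univ) (by simp)).symm

theorem colorCount_add_colorCount_succ_le_two [NeZero r] (hr : r ≠ 1)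
    {c : Fin r × Fin m → Fin k} (hc : IsTriangleFreeColoring (cycleClique r m) c) (i : Fin r)
    (a : Fin k) : colorCount c i a + colorCount c (i + 1) a ≤ 2 := by
  have hne : i ≠ i + 1 := by simpa [eq_comm] using hr
  rw [colorCount, colorCount,
    ← card_union_of_disjoint (disjoint_filter_filter (disjoint_joint hne)), ← filter_union]
  exact hc.card_filter_le_two (isClique_joint_union_joint_succ i) a

theorem colorCount_add_colorCount_succ [NeZero r] (hr : r ≠ 1) {c : Fin r × Fin k → Fin k}
    (hc : IsTriangleFreeColoring (cycleClique r k) c) (i : Fin r) (a : Fin k) :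
    colorCount c i a + colorCount c (i + 1) a = 2 := by
  have hsum : ∑ a, (colorCount c i a + colorCount c (i + 1) a) = ∑ _a : Fin k, 2 := by
    rw [sum_add_distrib, sum_colorCount, sum_colorCount, Fin.sum_const, smul_eq_mul, mul_two]
  have hle : ∀ a ∈ univ, colorCount c i a + colorCount c (i + 1) a ≤ 2 := fun a _ =>
    colorCount_add_colorCount_succ_le_two hr hc i a
  exact (sum_eq_sum_iff_of_le hle).1 hsum a (mem_univ a)

theorem antiperiodic_colorCount_sub_one [NeZero r] (hr : r ≠ 1) {c : Fin r × Fin k → Fin k}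
    (hc : IsTriangleFreeColoring (cycleClique r k) c) (a : Fin k) :
    Function.Antiperiodic (fun i => (colorCount c i a : ℤ) - 1) 1 := by
  intro i
  have hpair := colorCount_add_colorCount_succ hr hc i a
  dsimp only
  omega

theorem colorCount_eq_one (hodd : Odd r) (hr : r ≠ 1) {c : Fin r × Fin k → Fin k}
    (hc : IsTriangleFreeColoring (cycleClique r k) c) (i : Fin r) (a : Fin k) :
    colorCount c i a = 1 := by
  have : NeZero r := ⟨hodd.pos.ne'⟩
  have haround : r • (1 : Fin r) = 0 := by simpa using card_nsmul_eq_zero (x := (1 : Fin r))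
  obtain ⟨n, hn⟩ := hodd
  have hanti := (antiperiodic_colorCount_sub_one hr hc a).odd_nsmul_antiperiodic n i
  rw [← hn, haround, add_zero] at hanti
  omega

end cycleClique

theorem cycleClique_joint_colors_distinct_general {r k : ℕ} (hodd : Odd r) (hr : r ≠ 1)
    {c : Fin r × Fin k → Fin k} (hc : IsTriangleFreeColoring (cycleClique r k) c) (i : Fin r) :
    Function.Injective fun j => c (i, j) := by
  intro j j' hjj'
  have hone := cycleClique.colorCount_eq_one hodd hr hc i (c (i, j))
  have heq : (i, j) = (i, j') := card_le_one.1 hone.le _ (by simp) _ (by simp [hjj'.symm])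
  exact congrArg Prod.snd heq

/-- In every triangle-free `k`-coloring of the `k`-cycle-clique, the vertices of each
joint `J_i` receive pairwise distinct colors. -/
theorem cycleClique_joint_colors_distinct (k : ℕ) (hk : 1 ≤ k)
    (c : Fin 5 × Fin k → Fin k) (hc : IsTriangleFreeColoring (cycleClique 5 k) c)
    (i : Fin 5) : ∀ j j' : Fin k, c (i, j) = c (i, j') → j = j' := fun _ _ hcolor =>
  cycleClique_joint_colors_distinct_general (by decide) (by decide) hc i hcolor
end

section
/- Let k ≥ 1. Every assignment of k pairwise distinct colors from {1,…,k} to the k vertices of the joint J₀ of the k-cycle-clique extends to a triangle-free k-coloring of the entire k-cycle-clique. -/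
/-!
Give `v_{i,j}` the color of `v_{0,j}`. As the given colors are pairwise distinct, the vertices of a
monochromatic triangle share their second coordinate, so their first coordinates form a triangle in
the cycle of joints, and only the cycle of length `3` has a triangle.
-/

open SimpleGraph

theorem add_add_intUnits_dvd_three (x y z : ℤˣ) : (x + y + z : ℤ) ∣ 3 := by
  decide +revert

-- Around a triangle three differences `±g` sum to zero, and a sum of three signs divides `3`.
theorem circulantGraph_singleton_cliqueFree_three {A : Type*} [AddGroup A] {g : A}
    (hg : 3 • g ≠ 0) : (circulantGraph {g}).CliqueFree 3 := by
  classical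
  intro s hs
  obtain ⟨a, b, c, hab, hac, hbc, -⟩ := is3Clique_iff.mp hs
  have sub_eq_unit_zsmul {u v : A} (h : (circulantGraph {g}).Adj u v) :
      ∃ ε : ℤˣ, u - v = (ε : ℤ) • g := by
    rcases h.2 with huv | hvu
    · exact ⟨1, by simpa using huv⟩
    · exact ⟨-1, by simp [← Set.mem_singleton_iff.mp hvu]⟩
  obtain ⟨x, hx⟩ := sub_eq_unit_zsmul hab
  obtain ⟨y, hy⟩ := sub_eq_unit_zsmul hbc
  obtain ⟨z, hz⟩ := sub_eq_unit_zsmul hac.symm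
  have sum_zsmul_eq_zero : (x + y + z : ℤ) • g = 0 := by
    rw [add_zsmul, add_zsmul, ← hx, ← hy, ← hz, sub_add_sub_cancel, sub_add_sub_cancel, sub_self]
  have addOrderOf_dvd_three : (addOrderOf g : ℤ) ∣ 3 :=
    (addOrderOf_dvd_iff_zsmul_eq_zero.mpr sum_zsmul_eq_zero).trans
      (add_add_intUnits_dvd_three x y z)
  exact hg (addOrderOf_dvd_iff_nsmul_eq_zero.mp (by exact_mod_cast addOrderOf_dvd_three))

theorem cycleGraph_cliqueFree_three {n : ℕ} (hn : n ≠ 3) : (cycleGraph n).CliqueFree 3 := by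
  match n with
  | 0 => exact cliqueFree_of_card_lt (by simp)
  | 1 => exact cliqueFree_of_card_lt (by simp)
  | n + 2 =>
    -- `ZMod (n + 2)` unfolds to `Fin (n + 2)`.
    have addOrderOf_one : addOrderOf (1 : Fin (n + 2)) = n + 2 := ZMod.addOrderOf_one (n + 2)
    have three_nsmul_one_ne_zero : 3 • (1 : Fin (n + 2)) ≠ 0 := by
      rw [Ne, ← addOrderOf_dvd_iff_nsmul_eq_zero, addOrderOf_one, Nat.dvd_prime Nat.prime_three]
      lia
    rw [cycleGraph_eq_circulantGraph]
    exact circulantGraph_singleton_cliqueFree_three three_nsmul_one_ne_zero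

theorem isTriangleFreeColoring_of_cliqueFree_three {V W : Type*} {G : SimpleGraph V}
    {H : SimpleGraph W} (hH : H.CliqueFree 3) {k : ℕ} {c : V → Fin k} (f : V → W)
    (hf : ∀ u v, G.Adj u v → c u = c v → H.Adj (f u) (f v)) : IsTriangleFreeColoring G c := by
  classical
  rintro u v w huv hvw huw ⟨hcuv, hcvw⟩
  exact hH {f u, f v, f w} <| is3Clique_triple_iff.mpr
    ⟨hf u v huv hcuv, hf u w huw (hcuv.trans hcvw), hf v w hvw hcvw⟩

theorem cycleClique_adj {r k : ℕ} {p q : Fin r × Fin k} :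
    (cycleClique r k).Adj p q ↔ p ≠ q ∧ (p.1 = q.1 ∨ (cycleGraph r).Adj p.1 q.1) := by
  match r with
  | 0 => exact p.1.elim0
  | 1 => simp [cycleClique, Subsingleton.elim p.1 q.1]
  | n + 2 =>
    have val_add_one_mod_eq_iff (i j : Fin (n + 2)) :
        (i.val + 1) % (n + 2) = j.val ↔ j - i = 1 := by
      rw [sub_eq_iff_eq_add', eq_comm, Fin.ext_iff, Fin.val_add, Fin.val_one]
    simp only [cycleClique, fromRel_adj, val_add_one_mod_eq_iff, cycleGraph_adj]
    tauto

theorem cycleClique_extend_coloring_general {r k m : ℕ} (hr : r ≠ 3) (i : Fin r)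
    {d : Fin k → Fin m} (hd : Function.Injective d) :
    ∃ c : Fin r × Fin k → Fin m,
      IsTriangleFreeColoring (cycleClique r k) c ∧ ∀ j : Fin k, c (i, j) = d j := by
  refine ⟨d ∘ Prod.snd, ?_, fun _ ↦ rfl⟩
  refine isTriangleFreeColoring_of_cliqueFree_three (cycleGraph_cliqueFree_three hr) Prod.fst ?_
  intro p q hpq hcolor
  obtain ⟨hne, hadj⟩ := cycleClique_adj.mp hpq
  exact hadj.resolve_left fun hfst ↦ hne (Prod.ext hfst (hd hcolor))

/-- Every assignment of `k` pairwise distinct colors to the joint `J₀` of the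
`k`-cycle-clique extends to a triangle-free `k`-coloring of the whole graph. -/
theorem cycleClique_extend_coloring (k : ℕ) (hk : 1 ≤ k) (d : Fin k → Fin k)
    (hd : Function.Injective d) :
    ∃ c : Fin 5 × Fin k → Fin k,
      IsTriangleFreeColoring (cycleClique 5 k) c ∧ ∀ j : Fin k, c (0, j) = d j :=
  cycleClique_extend_coloring_general (by decide) 0 hd
end

section
/- For every integer k ≥ 2, there exists a finite simple graph G with ω(G) = 2k and χ₃(G) = ⌈ω(G)/2⌉ + 1 = k + 1. -/
/-- The clique number: the largest `n` such that `G` contains `K_n` as a subgraph. -/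
noncomputable def cliqueNum' {V : Type*} (G : SimpleGraph V) : ℕ :=
  sSup {n : ℕ | ∃ s : Finset V, G.IsNClique n s}

/-!
Joining a graph with `K₂` raises the clique number by 2 and, more surprisingly, the triangle-free
chromatic number by exactly 1: in a coloring of the join, the vertices of the old graph sharing a
color with one of the two new vertices form an independent set, and the two independent sets so
obtained can be merged into a single bipartite class, which is triangle-free; this saves a color. So
it suffices to find one example with `k = 2`, and the join of `C₇ᶜ` with a single vertex is one: its
clique number is `α(C₇) + 1 = 4`, and in a 2-coloring the class of the extra vertex contains at most
2 vertices of `C₇ᶜ` (as `C₇` is triangle-free), while the other 5 vertices contain a translate of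
`{0, 2, 4}`, a triangle of `C₇ᶜ`.
-/

open Finset SimpleGraph
open scoped Pointwise

variable {V W : Type*} {G : SimpleGraph V} {H : SimpleGraph W} {k l : ℕ}

theorem cliqueNum'_eq_cliqueNum (G : SimpleGraph V) : cliqueNum' G = G.cliqueNum := rfl

theorem cliqueNum_le_of_isContained [Finite W] (h : G ⊑ H) : G.cliqueNum ≤ H.cliqueNum := by
  obtain ⟨s, hs⟩ := G.exists_isNClique_cliqueNum
  have hH : ¬H.CliqueFree G.cliqueNum := fun hfree => hfree.comap h s hs
  obtain ⟨t, ht⟩ := not_forall_not.1 hH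
  exact ht.card_eq ▸ ht.isClique.card_le_cliqueNum

theorem cliqueNum_eq_of_iso [Finite V] [Finite W] (e : G ≃g H) : G.cliqueNum = H.cliqueNum :=
  (cliqueNum_le_of_isContained ⟨e.toCopy⟩).antisymm (cliqueNum_le_of_isContained ⟨e.symm.toCopy⟩)

theorem cliqueNum_top [Fintype V] : (⊤ : SimpleGraph V).cliqueNum = Fintype.card V := by
  obtain ⟨s, hs⟩ := (⊤ : SimpleGraph V).exists_isNClique_cliqueNum
  refine le_antisymm (hs.card_eq ▸ s.card_le_univ) ?_
  have huniv : (⊤ : SimpleGraph V).IsClique (univ : Finset V) := fun _ _ _ _ h => h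
  exact huniv.card_le_cliqueNum

/-- The join of two graphs: their disjoint union together with all edges between the two parts. -/
def graphJoin (G : SimpleGraph V) (H : SimpleGraph W) : SimpleGraph (V ⊕ W) :=
  (G ⊕g H) ⊔ completeBipartiteGraph V W

local infixl:60 " ∨g " => graphJoin

@[simp]
theorem graphJoin_adj_inl {v v' : V} : (G ∨g H).Adj (.inl v) (.inl v') ↔ G.Adj v v' := by
  simp [graphJoin]

@[simp]
theorem graphJoin_adj_inr {w w' : W} : (G ∨g H).Adj (.inr w) (.inr w') ↔ H.Adj w w' := by
  simp [graphJoin]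

@[simp]
theorem graphJoin_adj_inl_inr (v : V) (w : W) : (G ∨g H).Adj (.inl v) (.inr w) := by
  simp [graphJoin]

instance [DecidableRel G.Adj] [DecidableRel H.Adj] : DecidableRel (G ∨g H).Adj
  | .inl _, .inl _ => decidable_of_iff' _ graphJoin_adj_inl
  | .inr _, .inr _ => decidable_of_iff' _ graphJoin_adj_inr
  | .inl v, .inr w => isTrue (graphJoin_adj_inl_inr v w)
  | .inr w, .inl v => isTrue (graphJoin_adj_inl_inr v w).symm

theorem isClique_graphJoin_disjSum {s : Finset V} {t : Finset W} :
    (G ∨g H).IsClique (s.disjSum t : Finset (V ⊕ W)) ↔ G.IsClique s ∧ H.IsClique t := by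
  constructor
  · intro h
    exact ⟨fun v hv v' hv' hne => graphJoin_adj_inl.1
        (h (by simpa using hv) (by simpa using hv') (by simpa using hne)),
      fun w hw w' hw' hne => graphJoin_adj_inr.1
        (h (by simpa using hw) (by simpa using hw') (by simpa using hne))⟩
  · rintro ⟨hs, ht⟩ (v | w) hx (v' | w') hy hne
    · exact graphJoin_adj_inl.2
        (hs (by simpa using hx) (by simpa using hy) (by simpa using hne))
    · exact graphJoin_adj_inl_inr v w'
    · exact (graphJoin_adj_inl_inr v' w).symm
    · exact graphJoin_adj_inr.2
        (ht (by simpa using hx) (by simpa using hy) (by simpa using hne))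

theorem cliqueNum_graphJoin [Finite V] [Finite W] :
    (G ∨g H).cliqueNum = G.cliqueNum + H.cliqueNum := by
  apply le_antisymm
  · obtain ⟨u, hu⟩ := (G ∨g H).exists_isNClique_cliqueNum
    obtain ⟨hleft, hright⟩ : G.IsClique u.toLeft ∧ H.IsClique u.toRight := by
      rw [← isClique_graphJoin_disjSum, toLeft_disjSum_toRight]
      exact hu.isClique
    rw [← hu.card_eq, ← card_toLeft_add_card_toRight]
    exact add_le_add hleft.card_le_cliqueNum hright.card_le_cliqueNum
  · obtain ⟨s, hs⟩ := G.exists_isNClique_cliqueNum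
    obtain ⟨t, ht⟩ := H.exists_isNClique_cliqueNum
    rw [← hs.card_eq, ← ht.card_eq, ← card_disjSum]
    exact (isClique_graphJoin_disjSum.2 ⟨hs.isClique, ht.isClique⟩).card_le_cliqueNum

/-- `G` admits a triangle-free coloring with `k` colors, not all of which need be used. -/
def TriangleFreeColorable (G : SimpleGraph V) (k : ℕ) : Prop :=
  ∃ c : V → Fin k, IsTriangleFreeColoring G c

theorem TriangleFreeColorable.mono (hkl : k ≤ l) :
    TriangleFreeColorable G k → TriangleFreeColorable G l := by
  rintro ⟨c, hc⟩
  refine ⟨Fin.castLE hkl ∘ c, fun u v w huv hvw huw hmono => hc u v w huv hvw huw ?_⟩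
  simpa using hmono

theorem triChromNum_eq_succ_iff :
    triChromNum G = k + 1 ↔ TriangleFreeColorable G (k + 1) ∧ ¬TriangleFreeColorable G k :=
  Nat.sInf_upward_closed_eq_succ_iff (fun _ _ => TriangleFreeColorable.mono) k

theorem TriangleFreeColorable.of_hom (f : G →g H) :
    TriangleFreeColorable H k → TriangleFreeColorable G k := by
  rintro ⟨c, hc⟩
  exact ⟨c ∘ f, fun u v w huv hvw huw => hc _ _ _ (f.map_adj huv) (f.map_adj hvw) (f.map_adj huw)⟩

theorem triangleFreeColorable_congr (e : G ≃g H) :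
    TriangleFreeColorable G k ↔ TriangleFreeColorable H k :=
  ⟨.of_hom e.symm.toHom, .of_hom e.toHom⟩

theorem IsTriangleFreeColoring.triangleFreeColorable_of_forall_ne {c : V → Fin (k + 1)}
    (hc : IsTriangleFreeColoring G c) {i : Fin (k + 1)} (hi : ∀ v, c v ≠ i) :
    TriangleFreeColorable G k := by
  choose d hd using fun v => Fin.exists_succAbove_eq (hi v)
  refine ⟨d, fun u v w huv hvw huw hmono => hc u v w huv hvw huw ?_⟩
  rw [← hd u, ← hd v, ← hd w, hmono.1, hmono.2]
  exact ⟨rfl, rfl⟩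

theorem triangleFreeColorable_of_card_le_two_mul [Fintype V] (hV : Fintype.card V ≤ 2 * k) :
    TriangleFreeColorable G k := by
  let e := Fintype.equivFin V
  refine ⟨fun v => ⟨e v / 2, by omega⟩, fun u v w huv hvw huw hmono => ?_⟩
  have hne {x y : V} (hxy : G.Adj x y) : (e x : ℕ) ≠ e y :=
    Fin.val_ne_of_ne (e.injective.ne hxy.ne)
  have huv' := hne huv
  have hvw' := hne hvw
  have huw' := hne huw
  simp only [Fin.mk.injEq] at hmono
  omega

theorem TriangleFreeColorable.graphJoin (hG : TriangleFreeColorable G k)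
    (hH : TriangleFreeColorable H l) : TriangleFreeColorable (G ∨g H) (k + l) := by
  obtain ⟨c, hc⟩ := hG
  obtain ⟨d, hd⟩ := hH
  have hne (i : Fin k) (j : Fin l) : Fin.castAdd l i ≠ Fin.natAdd k j := by
    simp only [ne_eq, Fin.ext_iff, Fin.val_castAdd, Fin.val_natAdd]
    omega
  refine ⟨Sum.elim (Fin.castAdd l ∘ c) (Fin.natAdd k ∘ d), ?_⟩
  rintro (u | u) (v | v) (w | w) huv hvw huw ⟨h₁, h₂⟩
  · exact hc u v w (by simpa using huv) (by simpa using hvw) (by simpa using huw)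
      (by simpa using And.intro h₁ h₂)
  · exact hne _ _ h₂
  · exact hne _ _ h₁
  · exact hne _ _ h₁
  · exact hne _ _ h₁.symm
  · exact hne _ _ h₁.symm
  · exact hne _ _ h₂.symm
  · exact hd u v w (by simpa using huv) (by simpa using hvw) (by simpa using huw)
      (by simpa using And.intro h₁ h₂)

theorem IsTriangleFreeColoring.isIndepSet_of_graphJoin {c : V ⊕ W → Fin k}
    (hc : IsTriangleFreeColoring (G ∨g H) c) (w : W) :
    G.IsIndepSet {v | c (.inl v) = c (.inr w)} := fun u hu v hv _ huv =>
  hc (.inl u) (.inl v) (.inr w) (graphJoin_adj_inl.2 huv) (graphJoin_adj_inl_inr v w)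
    (graphJoin_adj_inl_inr u w) ⟨hu.trans hv.symm, hv⟩

theorem TriangleFreeColorable.exists_isIndepSet_cliqueFreeOn_compl [Nonempty W]
    (h : TriangleFreeColorable (G ∨g H) 2) :
    ∃ s : Set V, G.IsIndepSet s ∧ G.CliqueFreeOn sᶜ 3 := by
  classical
  obtain ⟨c, hc⟩ := h
  obtain ⟨a⟩ := ‹Nonempty W›
  refine ⟨{v | c (.inl v) = c (.inr a)}, hc.isIndepSet_of_graphJoin a, fun t hts ht => ?_⟩
  obtain ⟨u, v, w, huv, huw, hvw, rfl⟩ := is3Clique_iff.1 ht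
  have hne : ∀ x ∈ ({u, v, w} : Finset V), c (.inl x) ≠ c (.inr a) := fun x hx => hts hx
  have hu := hne u (by simp)
  have hv := hne v (by simp)
  have hw := hne w (by simp)
  exact hc _ _ _ (graphJoin_adj_inl.2 huv) (graphJoin_adj_inl.2 hvw) (graphJoin_adj_inl.2 huw)
    ⟨by omega, by omega⟩

theorem IsTriangleFreeColoring.merge_isIndepSet {c : V → Fin k} (hc : IsTriangleFreeColoring G c)
    {i j : Fin k} (hi : G.IsIndepSet {v | c v = i}) (hj : G.IsIndepSet {v | c v = j}) :
    IsTriangleFreeColoring G fun v => if c v = j then i else c v := by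
  set d : V → Fin k := fun v => if c v = j then i else c v
  rintro u v w huv hvw huw ⟨hduv, hdvw⟩
  by_cases hu : d u = i
  · have hv : d v = i := hduv ▸ hu
    have hw : d w = i := hdvw ▸ hv
    have hclass {x : V} (hx : d x = i) : c x = i ∨ c x = j := by grind
    have hproper {x y : V} (hxy : G.Adj x y) (hx : d x = i) : c x ≠ c y := fun hcxy =>
      (hclass hx).elim (fun hxi => hi hxi (hcxy.symm.trans hxi) hxy.ne hxy)
        (fun hxj => hj hxj (hcxy.symm.trans hxj) hxy.ne hxy)
    -- Two colors do not suffice for the pairwise distinct `c u`, `c v`, `c w`.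
    grind [hclass hu, hclass hv, hclass hw, hproper huv hu, hproper hvw hv, hproper huw hu]
  · have hkeep {x : V} (hx : d x ≠ i) : d x = c x := if_neg fun hxj => hx (if_pos hxj)
    have hv : d v ≠ i := hduv ▸ hu
    have hw : d w ≠ i := hdvw ▸ hv
    rw [hkeep hu, hkeep hv] at hduv
    rw [hkeep hv, hkeep hw] at hdvw
    exact hc u v w huv hvw huw ⟨hduv, hdvw⟩

theorem TriangleFreeColorable.of_graphJoin_top [Nontrivial W]
    (h : TriangleFreeColorable (G ∨g (⊤ : SimpleGraph W)) (k + 1)) : TriangleFreeColorable G k := by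
  obtain ⟨c, hc⟩ := h
  obtain ⟨a, b, hab⟩ := exists_pair_ne W
  have hcG : IsTriangleFreeColoring G (c ∘ .inl) := fun _ _ _ huv hvw huw =>
    hc _ _ _ (graphJoin_adj_inl.2 huv) (graphJoin_adj_inl.2 hvw) (graphJoin_adj_inl.2 huw)
  have hshare {v : V} (hvb : c (.inl v) = c (.inr b)) : c (.inr a) ≠ c (.inr b) := fun hcab =>
    hc (.inl v) (.inr a) (.inr b) (graphJoin_adj_inl_inr v a) (graphJoin_adj_inr.2 hab)
      (graphJoin_adj_inl_inr v b) ⟨hvb.trans hcab.symm, hcab⟩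
  -- If `a` and `b` share a color, no vertex of `G` has it, and the merging changes nothing.
  refine (hcG.merge_isIndepSet (hc.isIndepSet_of_graphJoin a)
    (hc.isIndepSet_of_graphJoin b)).triangleFreeColorable_of_forall_ne (i := c (.inr b)) fun v => ?_
  by_cases hvb : c (.inl v) = c (.inr b)
  · simpa only [Function.comp_apply, if_pos hvb] using hshare hvb
  · simpa only [Function.comp_apply, if_neg hvb] using hvb

theorem triangleFreeColorable_graphJoin_top_fin_two_iff :
    TriangleFreeColorable (G ∨g (⊤ : SimpleGraph (Fin 2))) (k + 1) ↔ TriangleFreeColorable G k :=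
  ⟨.of_graphJoin_top, fun h =>
    h.graphJoin (triangleFreeColorable_of_card_le_two_mul (k := 1) (by simp))⟩

theorem cliqueFree_three_cycleGraph (n : ℕ) : (cycleGraph (n + 4)).CliqueFree 3 := by
  intro s hs
  obtain ⟨u, v, w, huv, huw, hvw, rfl⟩ := is3Clique_iff.1 hs
  simp only [cycleGraph_adj, sub_eq_iff_eq_add', Fin.ext_iff, Fin.val_add_one, Fin.val_last]
    at huv huw hvw
  grind

theorem two_mul_card_le_of_isIndepSet_cycleGraph {n : ℕ} {s : Finset (Fin (n + 2))}
    (hs : (cycleGraph (n + 2)).IsIndepSet s) : 2 * #s ≤ n + 2 := by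
  have hdisj : Disjoint s (s.map (addRightEmbedding 1)) := by
    rw [Finset.disjoint_left]
    intro v hv hv'
    obtain ⟨u, hu, rfl⟩ := mem_map.1 hv'
    exact hs hv hu (by simp) (by simp [cycleGraph_adj])
  calc 2 * #s = #(s.disjUnion _ hdisj) := by rw [card_disjUnion, card_map, two_mul]
    _ ≤ n + 2 := by simpa using card_le_univ (s.disjUnion _ hdisj)

section Circulant

variable {Γ : Type*} [AddGroup Γ] [Fintype Γ] [DecidableEq Γ]

theorem exists_forall_add_mem {s t : Finset Γ} (h : #t * #sᶜ < Fintype.card Γ) :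
    ∃ g : Γ, ∀ x ∈ t, x + g ∈ s := by
  have hcard : #(-t + sᶜ) < #(univ : Finset Γ) := by
    rw [card_univ]
    exact card_add_le.trans_lt (by rwa [card_neg])
  obtain ⟨g, -, hg⟩ := exists_mem_notMem_of_card_lt_card hcard
  refine ⟨g, fun x hx => ?_⟩
  by_contra hxg
  exact hg (mem_add.2 ⟨-x, neg_mem_neg hx, x + g, mem_compl.2 hxg, neg_add_cancel_left x g⟩)

theorem exists_isNIndepSet_circulantGraph_subset {S : Set Γ} {s t : Finset Γ} {n : ℕ}
    (ht : (circulantGraph S).IsNIndepSet n t) (h : n * #sᶜ < Fintype.card Γ) :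
    ∃ u ⊆ s, (circulantGraph S).IsNIndepSet n u := by
  rw [← ht.card_eq] at h
  obtain ⟨g, hg⟩ := exists_forall_add_mem h
  refine ⟨t.map (addRightEmbedding g), ?_, ?_, by rw [card_map, ht.card_eq]⟩
  · intro y hy
    obtain ⟨x, hx, rfl⟩ := mem_map.1 hy
    exact hg x hx
  · rw [coe_map]
    rintro _ ⟨x, hx, rfl⟩ _ ⟨y, hy, rfl⟩ hne hadj
    exact ht.isIndepSet hx hy (ne_of_apply_ne _ hne) (circulantGraph_adj_translate.1 hadj)

end Circulant

theorem isNIndepSet_cycleGraph_seven : (cycleGraph 7).IsNIndepSet 3 {0, 2, 4} := by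
  decide

theorem indepNum_cycleGraph_seven : (cycleGraph 7).indepNum = 3 := by
  obtain ⟨s, hs⟩ := (cycleGraph 7).exists_isNIndepSet_indepNum
  have hle := two_mul_card_le_of_isIndepSet_cycleGraph hs.isIndepSet
  have hge := isNIndepSet_cycleGraph_seven.isIndepSet.card_le_indepNum
  rw [hs.card_eq] at hle
  rw [isNIndepSet_cycleGraph_seven.card_eq] at hge
  omega

theorem card_le_four_of_cliqueFreeOn_compl_cycleGraph_seven {s : Finset (Fin 7)}
    (hs : (cycleGraph 7)ᶜ.CliqueFreeOn s 3) : #s ≤ 4 := by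
  by_contra! hcard
  have hcompl : 3 * #sᶜ < Fintype.card (Fin 7) := by
    rw [card_compl, Fintype.card_fin]
    omega
  have ht := isNIndepSet_cycleGraph_seven
  rw [cycleGraph_eq_circulantGraph] at hs ht
  obtain ⟨u, hus, hu⟩ := exists_isNIndepSet_circulantGraph_subset ht hcompl
  exact hs (coe_subset.2 hus) ((isNClique_compl _).2 hu)

/-- The join of the complement of the 7-cycle with a single vertex. -/
def coneComplCycleSeven : SimpleGraph (Fin 7 ⊕ Fin 1) := (cycleGraph 7)ᶜ ∨g ⊤

theorem cliqueNum_coneComplCycleSeven : coneComplCycleSeven.cliqueNum = 4 := by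
  rw [coneComplCycleSeven, cliqueNum_graphJoin, cliqueNum_compl, indepNum_cycleGraph_seven,
    cliqueNum_top, Fintype.card_fin]

theorem triangleFreeColorable_three_coneComplCycleSeven :
    TriangleFreeColorable coneComplCycleSeven 3 := by
  -- The classes are the path `0, 1, 2, 3` of `C₇`, the edge `{4, 5}` of `C₇` with the extra
  -- vertex, and `{6}`.
  refine ⟨Sum.elim ![0, 0, 0, 0, 1, 1, 2] ![1], ?_⟩
  unfold IsTriangleFreeColoring coneComplCycleSeven
  decide

theorem not_triangleFreeColorable_two_coneComplCycleSeven :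
    ¬TriangleFreeColorable coneComplCycleSeven 2 := by
  intro h
  obtain ⟨s, hindep, hfree⟩ := h.exists_isIndepSet_cliqueFreeOn_compl
  lift s to Finset (Fin 7) using s.toFinite
  rw [← coe_compl] at hfree
  have hs : #s ≤ 2 := by
    by_contra! hcard
    rw [isIndepSet_compl] at hindep
    obtain ⟨t, hts, ht⟩ := exists_subset_card_eq (n := 3) hcard
    exact cliqueFree_three_cycleGraph 3 t ⟨hindep.subset (coe_subset.2 hts), ht⟩
  have hcompl := card_le_four_of_cliqueFreeOn_compl_cycleGraph_seven hfree
  rw [card_compl, Fintype.card_fin] at hcompl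
  omega

theorem exists_fintype_graph_cliqueNum_triangleFreeColorable (k : ℕ) (hk : 2 ≤ k) :
    ∃ (V : Type) (_ : Fintype V) (G : SimpleGraph V), G.cliqueNum = 2 * k ∧
      TriangleFreeColorable G (k + 1) ∧ ¬TriangleFreeColorable G k := by
  induction k, hk using Nat.le_induction with
  | base =>
    exact ⟨_, inferInstance, coneComplCycleSeven, cliqueNum_coneComplCycleSeven,
      triangleFreeColorable_three_coneComplCycleSeven,
      not_triangleFreeColorable_two_coneComplCycleSeven⟩
  | succ k _ ih =>
    obtain ⟨V, _, G, hω, hcol, hncol⟩ := ih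
    refine ⟨V ⊕ Fin 2, inferInstance, G ∨g ⊤, ?_,
      triangleFreeColorable_graphJoin_top_fin_two_iff.2 hcol,
      triangleFreeColorable_graphJoin_top_fin_two_iff.not.2 hncol⟩
    rw [cliqueNum_graphJoin, hω, cliqueNum_top, Fintype.card_fin, mul_add_one]

/-- For every `k ≥ 2` there is a finite simple graph with `ω(G) = 2k` and
`χ₃(G) = ⌈ω(G)/2⌉ + 1 = k + 1`. -/
theorem exists_graph_meeting_bound (k : ℕ) (hk : 2 ≤ k) :
    ∃ (n : ℕ) (G : SimpleGraph (Fin n)),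
      cliqueNum' G = 2 * k ∧ triChromNum G = k + 1 ∧
        triChromNum G = (cliqueNum' G + 1) / 2 + 1 := by
  obtain ⟨V, _, G, hω, hcol, hncol⟩ := exists_fintype_graph_cliqueNum_triangleFreeColorable k hk
  let e := G.overFinIso rfl
  have hω' : cliqueNum' (G.overFin rfl) = 2 * k := by
    rw [cliqueNum'_eq_cliqueNum, ← cliqueNum_eq_of_iso e, hω]
  have hχ : triChromNum (G.overFin rfl) = k + 1 := by
    rw [triChromNum_eq_succ_iff, ← triangleFreeColorable_congr e, ← triangleFreeColorable_congr e]
    exact ⟨hcol, hncol⟩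
  refine ⟨Fintype.card V, G.overFin rfl, hω', hχ, ?_⟩
  omega
end

section
/- Let G be a finite connected simple graph with more than 3 vertices that is not a complete graph on an odd number of vertices. Then χ₃(G) ≤ ⌈Δ(G)/2⌉. -/
/-!
Colors of a proper `2k`-coloring can be merged in pairs: three mutually adjacent vertices have three
different colors, so they never fall into a single pair. For `k ≥ 2` the bound thus reduces to
Brooks' theorem with `2k ≥ Δ` colors, which leaves aside only graphs containing a clique on `2k + 1`
vertices; a connected graph containing a clique on `Δ + 1` vertices is that clique.

For Brooks' theorem, pass to a minimal subgraph that is not `k`-colorable and color it properly off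
one vertex, the hole. Since the hole has degree at most `k`, each color occurs exactly once around
it, so the color of any neighbor can be moved into the hole, which makes that neighbor the new hole.
A longest path along which the hole can travel starts at a vertex whose neighbors all lie on a cycle
through it. Letting the hole run around this cycle shows that no edge leaves the cycle. A chord at
the hole splits the cycle in two, and the same argument on both parts forces all colors on the cycle
to be distinct. As the neighbors of the hole carry all the colors, the hole is adjacent to the whole
cycle, which is therefore a clique on at least `k + 1` vertices.
-/

/-- `c` is a proper coloring of the graph obtained from `G` by deleting the vertex `u`, the
*hole*. Colorings stay total, so the value `c u` is junk. -/
def IsColoringOff {V α : Type*} (G : SimpleGraph V) (c : V → α) (u : V) : Prop :=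
  ∀ ⦃p q⦄, G.Adj p q → p ≠ u → q ≠ u → c p ≠ c q

/-- The cyclic sequence `C` of vertices runs once around a cycle of `G`. A single edge counts as a
cycle of length two, and the empty sequence is allowed. -/
structure IsGraphCycle {V : Type*} (G : SimpleGraph V) (C : Cycle V) : Prop where
  nodup : C.Nodup
  chain : C.Chain G.Adj

namespace IsColoringOff

variable {V α : Type*} {G : SimpleGraph V} {c : V → α} {u z : V}

theorem exists_adj_eq [IsEmpty (G.Coloring α)] (h : IsColoringOff G c u) (a : α) :
    ∃ z, G.Adj u z ∧ c z = a := by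
  classical
  by_contra! ha
  refine IsEmpty.false (α := G.Coloring α) (.mk (Function.update c u a) fun {p q} hpq ↦ ?_)
  rcases eq_or_ne p u with rfl | hp
  · simpa [hpq.ne'] using (ha q hpq).symm
  rcases eq_or_ne q u with rfl | hq
  · simpa [hpq.ne] using ha p hpq.symm
  · simpa [hp, hq] using h hpq hp hq

variable [Fintype α]

theorem exists_adj_interior [IsEmpty (G.Coloring α)] (h3 : 3 ≤ Fintype.card α)
    (h : IsColoringOff G c u) {t : List V} (ht : ∀ ⦃z⦄, G.Adj u z → z ∈ t) :
    ∃ p x z y q, t = p ++ x :: z :: y :: q ∧ G.Adj u z := by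
  classical
  have ht0 : t ≠ [] := by
    have : Nonempty α := Fintype.card_pos_iff.1 (by lia)
    obtain ⟨z, huz, -⟩ := h.exists_adj_eq (Classical.arbitrary α)
    exact List.ne_nil_of_mem (ht huz)
  obtain ⟨a, -, ha⟩ := Finset.exists_mem_notMem_of_card_lt_card
    (s := {c (t.head ht0), c (t.getLast ht0)}) (t := Finset.univ) (Finset.card_le_two.trans_lt h3)
  obtain ⟨z, huz, rfl⟩ := h.exists_adj_eq a
  obtain ⟨p, q, rfl⟩ := List.append_of_mem (ht huz)
  rcases p.eq_nil_or_concat' with rfl | ⟨p, x, rfl⟩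
  · simp at ha
  rcases q with _ | ⟨y, q⟩
  · simp at ha
  exact ⟨p, x, z, y, q, by simp, huz⟩

theorem card_le_degree [IsEmpty (G.Coloring α)] [Fintype (G.neighborSet u)]
    (h : IsColoringOff G c u) : Fintype.card α ≤ G.degree u := by
  rw [← G.card_neighborSet_eq_degree]
  refine Fintype.card_le_of_surjective (fun z : G.neighborSet u ↦ c z) fun a ↦ ?_
  obtain ⟨z, huz, hz⟩ := h.exists_adj_eq a
  exact ⟨⟨z, huz⟩, hz⟩

theorem injOn_neighborSet [IsEmpty (G.Coloring α)] [Fintype (G.neighborSet u)]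
    (hdeg : G.degree u ≤ Fintype.card α) (h : IsColoringOff G c u) :
    Set.InjOn c (G.neighborSet u) := by
  rw [← G.coe_neighborFinset]
  refine Finset.injOn_of_surjOn_of_card_le (t := Finset.univ) c (fun _ _ ↦ by simp)
    (fun a _ ↦ ?_) (by simpa using hdeg)
  simpa using h.exists_adj_eq a

variable [IsEmpty (G.Coloring α)] [G.LocallyFinite]
  (hdeg : ∀ v, G.degree v ≤ Fintype.card α)
include hdeg

theorem comp_swap [DecidableEq V] (h : IsColoringOff G c u) (huz : G.Adj u z) :
    IsColoringOff G (c ∘ Equiv.swap u z) z := by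
  have hz : ∀ q, G.Adj u q → q ≠ z → c z ≠ c q := fun q hq hqz hc ↦
    hqz (h.injOn_neighborSet (hdeg u) huz hq hc).symm
  intro p q hpq hpz hqz
  rcases eq_or_ne p u with rfl | hp
  · simpa [Equiv.swap_apply_of_ne_of_ne hpq.ne' hqz] using hz q hpq hqz
  rcases eq_or_ne q u with rfl | hq
  · simpa [Equiv.swap_apply_of_ne_of_ne hpq.ne hpz] using (hz p hpq.symm hpz).symm
  · simpa [Equiv.swap_apply_of_ne_of_ne, *] using h hpq hp hq

theorem comp_formPerm [DecidableEq V] {l : List V} (h : IsColoringOff G c u)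
    (hl : (u :: l).IsChain G.Adj) :
    IsColoringOff G (c ∘ (u :: l).formPerm) ((u :: l).getLast (List.cons_ne_nil u l)) := by
  induction l generalizing u c with
  | nil => simpa using h
  | cons z l ih =>
    rw [List.isChain_cons_cons] at hl
    simpa [← Function.comp_assoc] using ih (h.comp_swap hdeg hl.1) hl.2

theorem exists_isChain_forall_adj_mem [Finite V] (h : IsColoringOff G c u) :
    ∃ (v : V) (t : List V) (d : V → α), (v :: t).Nodup ∧ (v :: t).IsChain G.Adj ∧
      IsColoringOff G d v ∧ ∀ ⦃z⦄, G.Adj v z → z ∈ t := by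
  classical
  let s : Set (List V) :=
    {l | l.Nodup ∧ l.IsChain G.Adj ∧ ∃ v ∈ l.head?, ∃ d : V → α, IsColoringOff G d v}
  have hfin : s.Finite := by
    have := Fintype.ofFinite V
    have : Finite {l : List V | l.Nodup} := inferInstanceAs (Finite {l : List V // l.Nodup})
    exact (Set.toFinite {l : List V | l.Nodup}).subset fun l hl ↦ hl.1
  have hne : [u] ∈ s := ⟨by simp, by simp, u, by simp, c, h⟩
  obtain ⟨l, ⟨hnd, hch, v, hv, d, hd⟩, hmax⟩ := hfin.exists_maximalFor List.length s ⟨_, hne⟩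
  obtain ⟨t, rfl⟩ := List.head?_eq_some_iff.1 hv
  refine ⟨v, t, d, hnd, hch, hd, fun z hvz ↦ by_contra fun hz ↦ ?_⟩
  have hext : z :: v :: t ∈ s :=
    ⟨hnd.cons (by simp [hvz.ne', hz]), hch.cons_cons hvz.symm, z, by simp, _, hd.comp_swap hdeg hvz⟩
  simpa using hmax hext (by simp)

/-- Moving the hole once around the cycle shifts the colors of the other vertices by one step. -/
theorem comp_formPerm_tail [DecidableEq V] {t : List V} (h : IsColoringOff G c u)
    (hC : IsGraphCycle G (u :: t : List V)) : IsColoringOff G (c ∘ t.formPerm) u := by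
  have hnd : (u :: t).Nodup := hC.nodup
  have hch := hC.chain
  rw [Cycle.chain_coe_cons] at hch
  cases t with
  | nil => simpa using h
  | cons x s =>
    have hperm : (u :: (x :: s ++ [u])).formPerm = (x :: s).formPerm := by
      have hrot : (x :: s ++ [u]).formPerm = (u :: x :: s).formPerm :=
        (List.formPerm_eq_of_isRotated hnd List.IsRotated.cons_append_singleton).symm
      rw [List.cons_append, List.formPerm_cons_cons, ← List.cons_append, hrot,
        List.formPerm_cons_cons, Equiv.swap_mul_self_mul]
    have hturn := h.comp_formPerm hdeg hch
    rw [hperm] at hturn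
    simpa using hturn

theorem comp_formPerm_tail_pow [DecidableEq V] {t : List V} (h : IsColoringOff G c u)
    (hC : IsGraphCycle G (u :: t : List V)) (n : ℕ) :
    IsColoringOff G (c ∘ ⇑(t.formPerm ^ n)) u := by
  induction n with
  | zero => simpa using h
  | succ n ih =>
    simpa [pow_succ, ← Function.comp_assoc] using ih.comp_formPerm_tail hdeg hC

end IsColoringOff

theorem exists_eq_coe_cons_of_mem {V : Type*} {C : Cycle V} {u : V} (hu : u ∈ C) :
    ∃ t : List V, C = (u :: t : List V) := by
  induction C using Quotient.inductionOn with
  | h l =>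
    obtain ⟨s, t, rfl⟩ := List.append_of_mem hu
    exact ⟨t ++ s, Cycle.coe_eq_coe.2 List.isRotated_append⟩

theorem isCycleOn_formPerm {V : Type*} [DecidableEq V] {C : Cycle V} (hC : C.Nodup) :
    (C.formPerm hC).IsCycleOn {v | v ∈ C} := by
  induction C using Quotient.inductionOn with
  | h l => exact List.Nodup.isCycleOn_formPerm hC

theorem exists_formPerm_pow_apply_eq {V : Type*} [DecidableEq V] {C : Cycle V} {u v : V}
    (hC : C.Nodup) (hu : u ∈ C) (hv : v ∈ C) : ∃ n, (C.formPerm hC ^ n) u = v := by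
  have hfin : {v | v ∈ C}.Finite := by
    induction C using Quotient.inductionOn with
    | h l => exact l.finite_toSet
  obtain ⟨n, hn⟩ := (isCycleOn_formPerm hC).exists_pow_eq' hfin hu hv
  exact ⟨n, hn⟩

theorem inv_formPerm_pow_apply_mem {V : Type*} [DecidableEq V] {C : Cycle V} {u : V}
    (hC : C.Nodup) (hu : u ∈ C) (n : ℕ) : (C.formPerm hC ^ n)⁻¹ u ∈ C :=
  ((isCycleOn_formPerm hC).1.perm_pow n).perm_inv.mapsTo hu

theorem formPerm_append_cons_cons_apply {V : Type*} [DecidableEq V] {p q : List V} {x y : V}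
    (h : (p ++ x :: y :: q).Nodup) : (p ++ x :: y :: q).formPerm x = y := by
  simpa using List.formPerm_apply_lt_getElem _ h p.length (by simp)

theorem exists_mem_formPerm_apply_eq {V : Type*} [DecidableEq V] {p q : List V} {x w : V}
    (h : (p ++ x :: q).Nodup) (hw : w ∈ q) : ∃ v ∈ x :: q, (p ++ x :: q).formPerm v = w := by
  induction q generalizing p x with
  | nil => simp at hw
  | cons y q ih =>
    rcases List.mem_cons.1 hw with rfl | hw
    · exact ⟨x, List.mem_cons_self, formPerm_append_cons_cons_apply h⟩
    · obtain ⟨v, hv, rfl⟩ := ih (p := p ++ [x]) (by simpa using h) hw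
      exact ⟨v, List.mem_cons_of_mem x hv, by simp⟩

namespace IsGraphCycle

variable {V α : Type*} {G : SimpleGraph V} {C : Cycle V} {c : V → α} {u v w y z : V}

section
variable [Fintype α] [IsEmpty (G.Coloring α)] [G.LocallyFinite]
  (hdeg : ∀ v, G.degree v ≤ Fintype.card α)
include hdeg

theorem comp_formPerm [DecidableEq V] (hC : IsGraphCycle G C) (hu : u ∈ C)
    (h : IsColoringOff G c u) :
    IsColoringOff G (c ∘ C.formPerm hC.nodup) ((C.formPerm hC.nodup)⁻¹ u) := by
  obtain ⟨t, rfl⟩ := exists_eq_coe_cons_of_mem hu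
  have hl : (u :: t).IsChain G.Adj := by
    have := hC.chain
    rw [Cycle.chain_coe_cons, ← List.cons_append] at this
    exact this.left_of_append
  have hlast : (u :: t).formPerm⁻¹ u = (u :: t).getLast (List.cons_ne_nil u t) :=
    Equiv.Perm.inv_eq_iff_eq.2 (List.formPerm_apply_getLast u t).symm
  change IsColoringOff G (c ∘ (u :: t).formPerm) ((u :: t).formPerm⁻¹ u)
  exact hlast ▸ h.comp_formPerm hdeg hl

theorem comp_formPerm_pow [DecidableEq V] (hC : IsGraphCycle G C) (hu : u ∈ C)
    (h : IsColoringOff G c u) (n : ℕ) :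
    IsColoringOff G (c ∘ ⇑(C.formPerm hC.nodup ^ n)) ((C.formPerm hC.nodup ^ n)⁻¹ u) := by
  induction n with
  | zero => simpa using h
  | succ n ih =>
    have hmem := inv_formPerm_pow_apply_mem hC.nodup hu n
    simpa [pow_succ, Function.comp_assoc] using comp_formPerm hdeg hC hmem ih

theorem exists_isColoringOff (hC : IsGraphCycle G C) (hu : u ∈ C) (h : IsColoringOff G c u)
    (hv : v ∈ C) : ∃ d : V → α, IsColoringOff G d v := by
  classical
  obtain ⟨n, rfl⟩ := exists_formPerm_pow_apply_eq hC.nodup hv hu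
  exact ⟨_, by simpa using comp_formPerm_pow hdeg hC hu h n⟩

/-- Moving the hole along the cycle brings the color of `z` next to `y`, whose color is fixed. -/
theorem color_ne_of_notMem (hC : IsGraphCycle G C) (hu : u ∈ C) (h : IsColoringOff G c u)
    (hz : z ∈ C) (hzu : z ≠ u) (hw : w ∈ C) (hy : y ∉ C) (hwy : G.Adj w y) : c y ≠ c z := by
  classical
  obtain ⟨n, rfl⟩ := exists_formPerm_pow_apply_eq hC.nodup hw hz
  set σ := C.formPerm hC.nodup
  have hσy : (σ ^ n) y = y :=
    Function.IsFixedPt.perm_pow (C.formPerm_eq_self_of_notMem hC.nodup y hy) n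
  have hyhole : y ≠ (σ ^ n)⁻¹ u := fun e ↦ hy (e ▸ inv_formPerm_pow_apply_mem hC.nodup hu n)
  have hwhole : w ≠ (σ ^ n)⁻¹ u := fun e ↦ hzu (by simp [e, σ])
  simpa [hσy, σ] using (comp_formPerm_pow hdeg hC hu h n hwy hwhole hyhole).symm

theorem mem_of_adj (hC : IsGraphCycle G C) (hu : u ∈ C) (h : IsColoringOff G c u)
    (hN : ∀ ⦃z⦄, G.Adj u z → z ∈ C) (hw : w ∈ C) (hwy : G.Adj w y) : y ∈ C := by
  by_contra hy
  obtain ⟨z, huz, hz⟩ := h.exists_adj_eq (c y)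
  exact hC.color_ne_of_notMem hdeg hu h (hN huz) huz.ne' hw hy hwy hz.symm

end

section Chord

variable {p q : List V}

theorem left_of_chord (hC : IsGraphCycle G (u :: (p ++ z :: q) : List V)) (huz : G.Adj u z) :
    IsGraphCycle G (u :: (p ++ [z]) : List V) where
  nodup := by
    have := Cycle.nodup_coe_iff.1 hC.nodup
    rw [Cycle.nodup_coe_iff]
    grind
  chain := by
    have := hC.chain
    rw [Cycle.chain_coe_cons, List.append_assoc, List.cons_append, List.isChain_cons_split] at this
    rw [Cycle.chain_coe_cons, List.append_assoc, List.singleton_append, List.isChain_cons_split]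
    exact ⟨this.1, by simpa using huz.symm⟩

theorem right_of_chord (hC : IsGraphCycle G (u :: (p ++ z :: q) : List V)) (huz : G.Adj u z) :
    IsGraphCycle G (u :: z :: q : List V) where
  nodup := by
    have := Cycle.nodup_coe_iff.1 hC.nodup
    rw [Cycle.nodup_coe_iff]
    grind
  chain := by
    have := hC.chain
    rw [Cycle.chain_coe_cons, List.append_assoc, List.cons_append, List.isChain_cons_split] at this
    rw [Cycle.chain_coe_cons]
    exact this.2.cons_cons huz

end Chord

section
variable [Fintype α] [IsEmpty (G.Coloring α)] [G.LocallyFinite]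
  (hdeg : ∀ v, G.degree v ≤ Fintype.card α) {p q : List V} {x : V}
include hdeg

theorem color_ne_left_of_chord (hC : IsGraphCycle G (u :: (p ++ x :: z :: y :: q) : List V))
    (h : IsColoringOff G c u) (huz : G.Adj u z) (hw : w ∈ p ++ [x, z]) : c y ≠ c w := by
  have hnd := Cycle.nodup_coe_iff.1 hC.nodup
  have hleft : IsGraphCycle G (u :: (p ++ [x] ++ [z]) : List V) :=
    left_of_chord (q := y :: q) (by simpa using hC) huz
  have hzy : G.Adj z y := by
    have := hC.chain
    simp only [Cycle.chain_coe_cons, List.append_assoc, List.cons_append,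
      List.isChain_cons_append_cons_cons, List.isChain_cons_cons] at this
    exact this.2.2.1
  have hy : y ∉ u :: (p ++ [x] ++ [z]) := by grind
  exact hleft.color_ne_of_notMem hdeg (by simp) h (by simp_all) (by grind) (by simp) hy hzy

theorem color_ne_right_of_chord (hC : IsGraphCycle G (u :: (p ++ x :: z :: y :: q) : List V))
    (h : IsColoringOff G c u) (huz : G.Adj u z) (hw : w ∈ z :: y :: q) : c x ≠ c w := by
  have hnd := Cycle.nodup_coe_iff.1 hC.nodup
  have hright : IsGraphCycle G (u :: z :: y :: q : List V) :=
    right_of_chord (p := p ++ [x]) (by simpa using hC) huz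
  have hxz : G.Adj x z := by
    have := hC.chain
    simp only [Cycle.chain_coe_cons, List.append_assoc, List.cons_append,
      List.isChain_cons_append_cons_cons] at this
    exact this.2.1
  have hx : x ∉ u :: z :: y :: q := by grind
  exact hright.color_ne_of_notMem hdeg (by simp) h (List.mem_cons_of_mem u hw) (by grind) (by simp)
    hx hxz.symm

theorem color_ne_of_chord (hC : IsGraphCycle G (u :: (p ++ x :: z :: y :: q) : List V))
    (h : IsColoringOff G c u) (huz : G.Adj u z) (hw : w ∈ p ++ x :: z :: y :: q) (hwy : w ≠ y) :
    c y ≠ c w := by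
  classical
  have hnd : (p ++ x :: z :: y :: q).Nodup := (Cycle.nodup_coe_iff.1 hC.nodup).of_cons
  rcases (by grind : w ∈ p ++ [x, z] ∨ w ∈ q) with hw | hw
  · exact hC.color_ne_left_of_chord hdeg h huz hw
  set τ := (p ++ x :: z :: y :: q).formPerm with hτ
  have hxz : τ x = z := formPerm_append_cons_cons_apply hnd
  have hzy : τ z = y := by
    simpa [hτ] using formPerm_append_cons_cons_apply (p := p ++ [x]) (by simpa using hnd)
  obtain ⟨v, hv, rfl⟩ : ∃ v ∈ y :: q, τ v = w := by
    simpa [hτ] using exists_mem_formPerm_apply_eq (p := p ++ [x, z]) (by simpa using hnd) hw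
  obtain ⟨v, hvq, rfl⟩ : ∃ v' ∈ z :: y :: q, τ v' = v := by
    simpa [hτ] using exists_mem_formPerm_apply_eq (p := p ++ [x]) (by simpa using hnd) hv
  -- Two full turns of the hole carry the color of `y` to `x`, and that of `w` into the other cycle.
  have hturn := (h.comp_formPerm_tail hdeg hC).comp_formPerm_tail hdeg hC
  simpa [← hτ, hxz, hzy] using hC.color_ne_right_of_chord hdeg hturn huz hvq

theorem injOn_of_chord (hC : IsGraphCycle G (u :: (p ++ x :: z :: y :: q) : List V))
    (h : IsColoringOff G c u) (huz : G.Adj u z) :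
    Set.InjOn c {v | v ∈ p ++ x :: z :: y :: q} := by
  classical
  have hnd : (p ++ x :: z :: y :: q : List V).Nodup := (Cycle.nodup_coe_iff.1 hC.nodup).of_cons
  set τ := (p ++ x :: z :: y :: q).formPerm
  intro a ha b hb hab
  by_contra hne
  -- `n` full turns of the hole bring the color of `a` to `y`.
  obtain ⟨n, hn⟩ : ∃ n, (τ ^ n) y = a :=
    exists_formPerm_pow_apply_eq (Cycle.nodup_coe_iff.2 hnd) (by simp) ha
  have hmem : (τ ^ n)⁻¹ b ∈ p ++ x :: z :: y :: q :=
    inv_formPerm_pow_apply_mem (Cycle.nodup_coe_iff.2 hnd) hb n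
  have hb_ne : (τ ^ n)⁻¹ b ≠ y := by
    intro e
    exact hne (by simp [← hn, ← e])
  have := hC.color_ne_of_chord hdeg (h.comp_formPerm_tail_pow hdeg hC n) huz hmem hb_ne
  exact this (by simpa [τ, hn] using hab)

theorem adj_of_mem (h3 : 3 ≤ Fintype.card α) (hC : IsGraphCycle G C) (hu : u ∈ C)
    (h : IsColoringOff G c u) (hN : ∀ ⦃z⦄, G.Adj u z → z ∈ C) (hw : w ∈ C) (huw : u ≠ w) :
    G.Adj u w := by
  obtain ⟨t, rfl⟩ := exists_eq_coe_cons_of_mem hu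
  have hN' : ∀ ⦃z⦄, G.Adj u z → z ∈ t := fun z huz ↦
    (List.mem_cons.1 (hN huz)).resolve_left huz.ne'
  obtain ⟨p, x, z, y, q, rfl, huz⟩ := h.exists_adj_interior h3 hN'
  obtain ⟨v, huv, hv⟩ := h.exists_adj_eq (c w)
  have hw' := (List.mem_cons.1 hw).resolve_left huw.symm
  exact hC.injOn_of_chord hdeg h huz (hN' huv) hw' hv ▸ huv

theorem isClique (h3 : 3 ≤ Fintype.card α) (hC : IsGraphCycle G C) (hu : u ∈ C)
    (h : IsColoringOff G c u) (hN : ∀ ⦃z⦄, G.Adj u z → z ∈ C) : G.IsClique {v | v ∈ C} := by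
  intro v hv w hw hvw
  obtain ⟨d, hd⟩ := hC.exists_isColoringOff hdeg hu h hv
  exact hC.adj_of_mem hdeg h3 hv hd (fun z hz ↦ hC.mem_of_adj hdeg hu h hN hv hz) hw hvw

theorem not_cliqueFree (h3 : 3 ≤ Fintype.card α) (hC : IsGraphCycle G C) (hu : u ∈ C)
    (h : IsColoringOff G c u) (hN : ∀ ⦃z⦄, G.Adj u z → z ∈ C) :
    ¬ G.CliqueFree (Fintype.card α + 1) := by
  classical
  have hclique : G.IsNClique (G.degree u + 1) (insert u (G.neighborFinset u)) := by
    refine ⟨(hC.isClique hdeg h3 hu h hN).subset ?_, ?_⟩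
    · intro v
      simpa [or_imp] using ⟨fun e ↦ e ▸ hu, @hN v⟩
    · rw [Finset.card_insert_of_notMem (by simp), G.card_neighborFinset_eq_degree]
  exact fun hfree ↦ hfree.mono (by simpa using h.card_le_degree) _ hclique

end
end IsGraphCycle

theorem exists_isGraphCycle_of_isChain {V : Type*} {G : SimpleGraph V} {u z : V} {t : List V}
    (hnd : (u :: t).Nodup) (hch : (u :: t).IsChain G.Adj) (huz : G.Adj u z)
    (ht : ∀ ⦃w⦄, G.Adj u w → w ∈ t) :
    ∃ C : Cycle V, IsGraphCycle G C ∧ u ∈ C ∧ ∀ ⦃w⦄, G.Adj u w → w ∈ C := by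
  classical
  obtain ⟨b, q, p, hq, hub, htr, -⟩ := List.exists_of_eraseP (p := fun w ↦ decide (G.Adj u w))
    (List.mem_reverse.2 (ht huz)) (by simpa using huz)
  obtain rfl : t = p.reverse ++ b :: q.reverse := by simpa using congrArg List.reverse htr
  simp only [decide_eq_true_eq] at hq hub
  refine ⟨(u :: (p.reverse ++ [b]) : List V), ⟨?_, ?_⟩, by simp, fun w huw ↦ ?_⟩
  · rw [Cycle.nodup_coe_iff]
    grind
  · rw [List.isChain_cons_split] at hch
    rw [Cycle.chain_coe_cons, List.append_assoc, List.singleton_append, List.isChain_cons_split]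
    exact ⟨hch.1, by simpa using hub.symm⟩
  · grind [ht huw, Cycle.mem_coe_iff]

theorem exists_isColoringOff_of_isEmpty_coloring {V α : Type*} [Finite V] [Nonempty α]
    (G : SimpleGraph V) [IsEmpty (G.Coloring α)] :
    ∃ G' ≤ G, IsEmpty (G'.Coloring α) ∧ ∃ (u : V) (c : V → α), IsColoringOff G' c u := by
  classical
  obtain ⟨G', hle, hmin⟩ := exists_minimal_le_of_wellFoundedLT
    (fun G : SimpleGraph V ↦ IsEmpty (G.Coloring α)) G ‹_›
  have hbot : G' ≠ ⊥ := by
    rintro rfl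
    exact hmin.prop.false (.mk (fun _ ↦ Classical.arbitrary α) fun h ↦ h.elim)
  obtain ⟨u, v, huv⟩ := G'.ne_bot_iff_exists_adj.1 hbot
  have hlt : G'.deleteIncidenceSet u < G' := by
    refine (G'.deleteIncidenceSet_le u).lt_of_not_ge fun hge ↦ ?_
    simpa [SimpleGraph.deleteIncidenceSet_adj] using hge huv
  obtain ⟨c⟩ : Nonempty ((G'.deleteIncidenceSet u).Coloring α) :=
    not_isEmpty_iff.1 (hmin.not_prop_of_lt hlt)
  exact ⟨G', hle, hmin.prop, u, c, fun p q hpq hp hq ↦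
    c.valid (SimpleGraph.deleteIncidenceSet_adj.2 ⟨hpq, hp, hq⟩)⟩

/-- **Brooks' theorem**, without connectivity. -/
theorem colorable_of_degree_le_of_cliqueFree {V : Type*} [Finite V] (G : SimpleGraph V)
    [G.LocallyFinite] {k : ℕ} (hk : 3 ≤ k) (hdeg : ∀ v, G.degree v ≤ k)
    (hfree : G.CliqueFree (k + 1)) : G.Colorable k := by
  classical
  by_contra hcol
  have : IsEmpty (G.Coloring (Fin k)) := not_nonempty_iff.1 hcol
  have : NeZero k := ⟨by lia⟩
  have := Fintype.ofFinite V
  obtain ⟨G', hle, _, u, c, h⟩ := exists_isColoringOff_of_isEmpty_coloring (α := Fin k) G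
  have hdeg' : ∀ v, G'.degree v ≤ Fintype.card (Fin k) := fun v ↦
    (SimpleGraph.degree_le_of_le hle).trans (by simpa using hdeg v)
  obtain ⟨v, t, d, hnd, hch, hd, ht⟩ := h.exists_isChain_forall_adj_mem hdeg'
  obtain ⟨z, hvz, -⟩ := hd.exists_adj_eq 0
  obtain ⟨C, hC, hv, hN⟩ := exists_isGraphCycle_of_isChain hnd hch hvz ht
  refine hC.not_cliqueFree hdeg' (by simpa) hv hd hN ?_
  simpa using hfree.anti hle

theorem triChromNum_le {V : Type*} {G : SimpleGraph V} {k : ℕ} {c : V → Fin k}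
    (hc : IsTriangleFreeColoring G c) : triChromNum G ≤ k :=
  Nat.sInf_le ⟨c, hc⟩

theorem triChromNum_le_one {V : Type*} {G : SimpleGraph V} (h : G.CliqueFree 3) :
    triChromNum G ≤ 1 := by
  classical
  exact triChromNum_le (c := fun _ ↦ 0) fun u v w huv hvw huw _ ↦
    h {u, v, w} (SimpleGraph.is3Clique_triple_iff.2 ⟨huv, huw, hvw⟩)

theorem triChromNum_le_of_colorable_two_mul {V : Type*} {G : SimpleGraph V} {k : ℕ}
    (h : G.Colorable (2 * k)) : triChromNum G ≤ k := by
  obtain ⟨c⟩ := h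
  refine triChromNum_le (c := fun v ↦ (⟨c v / 2, by lia⟩ : Fin k)) ?_
  rintro u v w huv hvw huw ⟨huv', hvw'⟩
  have := Fin.val_ne_of_ne (c.valid huv)
  have := Fin.val_ne_of_ne (c.valid hvw)
  have := Fin.val_ne_of_ne (c.valid huw)
  grind

theorem erase_subset_neighborFinset_of_isClique {V : Type*} [DecidableEq V] {G : SimpleGraph V}
    {s : Finset V} {v : V} [Fintype (G.neighborSet v)] (hs : G.IsClique s) (hv : v ∈ s) :
    s.erase v ⊆ G.neighborFinset v := fun _ hw ↦
  (G.mem_neighborFinset _ _).2 <|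
    hs hv (Finset.mem_of_mem_erase hw) (Finset.ne_of_mem_erase hw).symm

section MaxDegree

variable {V : Type*} [Fintype V] (G : SimpleGraph V) [DecidableRel G.Adj]

theorem cliqueFree_maxDegree_add_two : G.CliqueFree (G.maxDegree + 2) := by
  classical
  intro s hs
  obtain ⟨v, hv⟩ : s.Nonempty := Finset.card_pos.1 (by simp [hs.card_eq])
  have := Finset.card_le_card (erase_subset_neighborFinset_of_isClique hs.isClique hv)
  have := G.degree_le_maxDegree v
  grind [hs.card_eq, Finset.card_erase_of_mem hv, G.card_neighborFinset_eq_degree v]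

variable {G}

theorem eq_top_and_card_eq_of_not_cliqueFree (hconn : G.Connected)
    (h : ¬ G.CliqueFree (G.maxDegree + 1)) : G = ⊤ ∧ Fintype.card V = G.maxDegree + 1 := by
  classical
  simp only [SimpleGraph.CliqueFree, not_forall, not_not] at h
  obtain ⟨s, hs⟩ := h
  have hclosed : ∀ v ∈ s, ∀ w, G.Adj v w → w ∈ s := by
    intro v hv w hvw
    have heq := Finset.eq_of_subset_of_card_le
      (erase_subset_neighborFinset_of_isClique hs.isClique hv)
      (by simpa [hv, hs.card_eq] using G.degree_le_maxDegree v)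
    exact Finset.mem_of_mem_erase (heq ▸ (G.mem_neighborFinset v w).2 hvw)
  obtain ⟨v, hv⟩ : s.Nonempty := Finset.card_pos.1 (by simp [hs.card_eq])
  have huniv : s = Finset.univ := by
    refine Finset.eq_univ_iff_forall.2 fun w ↦ ?_
    obtain ⟨p⟩ := hconn.preconnected v w
    induction p with
    | nil => exact hv
    | cons hadj _ ih => exact ih (hclosed _ hv _ hadj)
  subst huniv
  exact ⟨SimpleGraph.isClique_univ.1 (by simpa using hs.isClique), by simpa using hs.card_eq⟩

end MaxDegree

theorem triChromNum_le_maxDegree_half_general {V : Type*} [Fintype V] (G : SimpleGraph V)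
    [DecidableRel G.Adj] (h : Even G.maxDegree → G.CliqueFree (G.maxDegree + 1)) :
    triChromNum G ≤ (G.maxDegree + 1) / 2 := by
  obtain ⟨k, hk⟩ : ∃ k, k = (G.maxDegree + 1) / 2 := ⟨_, rfl⟩
  have hdeg : ∀ v, G.degree v ≤ 2 * k := fun v ↦ (G.degree_le_maxDegree v).trans (by lia)
  have hfree : G.CliqueFree (2 * k + 1) := by
    rcases Nat.even_or_odd' G.maxDegree with ⟨m, hm | hm⟩
    · exact (h (hm ▸ even_two_mul m)).mono (by lia)
    · exact (cliqueFree_maxDegree_add_two G).mono (by lia)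
  rw [← hk]
  obtain rfl | rfl | hk2 : k = 0 ∨ k = 1 ∨ 2 ≤ k := by lia
  · exact triChromNum_le_of_colorable_two_mul
      (SimpleGraph.colorable_zero_iff.2 (SimpleGraph.cliqueFree_one.1 hfree))
  · exact triChromNum_le_one hfree
  · exact triChromNum_le_of_colorable_two_mul
      (colorable_of_degree_le_of_cliqueFree G (by lia) hdeg hfree)

/-- For a finite connected simple graph `G` with more than 3 vertices that is not a
complete graph on an odd number of vertices, `χ₃(G) ≤ ⌈Δ(G)/2⌉`. -/
theorem triChromNum_le_maxDegree_half {V : Type*} [Fintype V] (G : SimpleGraph V)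
    [DecidableRel G.Adj] (hconn : G.Connected) (hcard : 3 < Fintype.card V)
    (hnc : ¬ (G = ⊤ ∧ Odd (Fintype.card V))) :
    triChromNum G ≤ (G.maxDegree + 1) / 2 :=
  triChromNum_le_maxDegree_half_general G fun heven ↦ by_contra fun hclique ↦
    have ⟨htop, hV⟩ := eq_top_and_card_eq_of_not_cliqueFree hconn hclique
    hnc ⟨htop, hV ▸ heven.add_one⟩
end

section
/- Let G be a finite simple graph that has a vertex cover W of size k. Then G admits a triangle-free (⌈k/2⌉ + 1)-coloring; in particular χ₃(G) ≤ ⌈k/2⌉ + 1. (Concretely: pair up the vertices of W, give each pair one of ⌈k/2⌉ colors, and give all remaining vertices one additional color.) -/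
/-!
A color class with at most two vertices contains no triangle, so any finite set of vertices can be
colored in pairs. Colorings of a set and of its complement with disjoint palettes combine, because
a monochromatic triangle lies on one side. Outside a set that meets every triangle one color is
enough, and a vertex cover is such a set.
-/

namespace IsTriangleFreeColoring

variable {V : Type*} {G : SimpleGraph V}

theorem triChromNum_le {k : ℕ} {c : V → Fin k} (hc : IsTriangleFreeColoring G c) :
    triChromNum G ≤ k :=
  Nat.sInf_le ⟨c, hc⟩

theorem exists_add_of_induce_compl {S : Set V} {m n : ℕ}
    {c : S → Fin m} {d : ↥Sᶜ → Fin n} (hc : IsTriangleFreeColoring (G.induce S) c)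
    (hd : IsTriangleFreeColoring (G.induce Sᶜ) d) :
    ∃ f : V → Fin (m + n), IsTriangleFreeColoring G f := by
  classical
  let e := Equiv.Set.sumCompl S
  refine ⟨finSumFinEquiv ∘ Sum.map c d ∘ e.symm, ?_⟩
  rintro u v w huv hvw huw ⟨huv_eq, hvw_eq⟩
  obtain ⟨x, rfl⟩ := e.surjective u
  obtain ⟨y, rfl⟩ := e.surjective v
  obtain ⟨z, rfl⟩ := e.surjective w
  simp only [Function.comp_apply, Equiv.symm_apply_apply, finSumFinEquiv.injective.eq_iff]
    at huv_eq hvw_eq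
  rcases x with x | x <;> rcases y with y | y <;> rcases z with z | z <;>
    simp only [Sum.map_inl, Sum.map_inr, Sum.inl.injEq, Sum.inr.injEq, reduceCtorEq]
      at huv_eq hvw_eq
  · exact hc x y z huv hvw huw ⟨huv_eq, hvw_eq⟩
  · exact hd x y z huv hvw huw ⟨huv_eq, hvw_eq⟩

variable (G) in
theorem exists_card_add_one_div_two [Finite V] :
    ∃ c : V → Fin ((Nat.card V + 1) / 2), IsTriangleFreeColoring G c := by
  let e : V ≃ Fin (Nat.card V) := Finite.equivFin V
  refine ⟨fun v => ⟨e v / 2, by omega⟩, ?_⟩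
  rintro u v w huv hvw huw ⟨huv_eq, hvw_eq⟩
  have index_ne {x y : V} (hxy : G.Adj x y) : (e x : ℕ) ≠ e y :=
    Fin.val_ne_of_ne (e.injective.ne hxy.ne)
  have huv_ne := index_ne huv
  have hvw_ne := index_ne hvw
  have huw_ne := index_ne huw
  rw [Fin.mk.injEq] at huv_eq hvw_eq
  -- Only `2 * i` and `2 * i + 1` have half `i`, so three distinct indices cannot share a color.
  omega

end IsTriangleFreeColoring

theorem triChromNum_le_of_vertexCover_general {V : Type*} (G : SimpleGraph V) (W : Finset V)
    (hW : ∀ u v w : V, G.Adj u v → G.Adj v w → G.Adj u w → u ∈ W ∨ v ∈ W ∨ w ∈ W) :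
    (∃ c : V → Fin ((W.card + 1) / 2 + 1), IsTriangleFreeColoring G c) ∧
      triChromNum G ≤ (W.card + 1) / 2 + 1 := by
  rw [← Set.ncard_coe_finset, ← Nat.card_coe_set_eq]
  obtain ⟨c, hc⟩ := IsTriangleFreeColoring.exists_card_add_one_div_two (G.induce (W : Set V))
  have hd : IsTriangleFreeColoring (G.induce (W : Set V)ᶜ) (fun _ => (0 : Fin 1)) := by
    rintro ⟨u, hu⟩ ⟨v, hv⟩ ⟨w, hw⟩ huv hvw huw -
    exact (hW u v w huv hvw huw).elim hu (Or.elim · hv hw)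
  obtain ⟨f, hf⟩ := hc.exists_add_of_induce_compl hd
  exact ⟨⟨f, hf⟩, hf.triChromNum_le⟩

/-- If `G` has a vertex cover of size `k`, then `G` has a triangle-free
`(⌈k/2⌉ + 1)`-coloring; in particular `χ₃(G) ≤ ⌈k/2⌉ + 1`. -/
theorem triChromNum_le_of_vertexCover {V : Type*} [Fintype V] (G : SimpleGraph V)
    (W : Finset V) (k : ℕ) (hW : ∀ u v : V, G.Adj u v → u ∈ W ∨ v ∈ W)
    (hcard : W.card = k) :
    (∃ c : V → Fin ((k + 1) / 2 + 1), IsTriangleFreeColoring G c) ∧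
      triChromNum G ≤ (k + 1) / 2 + 1 := by
  subst hcard
  exact triChromNum_le_of_vertexCover_general G W
    fun u v _ huv _ _ => (hW u v huv).imp_right Or.inl
end
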